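/- arXiv:1109.4664 — 3 statements merged into one kernel-verified Lean document; each statement's English description precedes it below -/
import Mathlib

section
/- Let a < b be real numbers and 0 < α < 1. If f and g are absolutely continuous on [a,b], then ∫_a^b g(x)·(C_aD_x^α f)(x) dx = [f(x)·(xI_b^{1−α} g)(x)]_{x=a}^{x=b} + ∫_a^b f(x)·(xD_b^α g)(x) dx, where the right Riemann–Liouville fractional derivative xD_b^α g exists almost everywhere and the boundary term denotes the difference of the values at x = b and x = a. -/
open MeasureTheory Set Real

noncomputable section

/-- Left Riemann–Liouville fractional integral `(ₐIₓ^α f)(x)`. -/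
def leftRLI (a α : ℝ) (f : ℝ → ℝ) (x : ℝ) : ℝ :=
  (1 / Real.Gamma α) * ∫ t in a..x, (x - t) ^ (α - 1) * f t

/-- Right Riemann–Liouville fractional integral `(ₓI_b^α f)(x)`. -/
def rightRLI (b α : ℝ) (f : ℝ → ℝ) (x : ℝ) : ℝ :=
  (1 / Real.Gamma α) * ∫ t in x..b, (t - x) ^ (α - 1) * f t

/-- A function is absolutely continuous on `[a, b]` iff it is the integral of its
(almost everywhere defined) derivative. -/
def AbsolutelyContinuousOn (f : ℝ → ℝ) (a b : ℝ) : Prop :=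
  IntervalIntegrable (deriv f) volume a b ∧
    ∀ x ∈ Icc a b, f x = f a + ∫ t in a..x, deriv f t

/-- Left Caputo fractional derivative `(ᶜₐDₓ^α f)(x)`. -/
def caputoLeft (a α : ℝ) (f : ℝ → ℝ) (x : ℝ) : ℝ :=
  (1 / Real.Gamma (1 - α)) * ∫ t in a..x, (x - t) ^ (-α) * deriv f t

/-- Right Caputo fractional derivative `(ᶜₓD_b^α f)(x)`. -/
def caputoRight (b α : ℝ) (f : ℝ → ℝ) (x : ℝ) : ℝ :=
  -(1 / Real.Gamma (1 - α)) * ∫ t in x..b, (t - x) ^ (-α) * deriv f t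

/-- Left Riemann–Liouville fractional derivative `(ₐDₓ^α g)(x) = d/dx (ₐIₓ^{1-α} g)(x)`. -/
def rlLeftD (a α : ℝ) (g : ℝ → ℝ) (x : ℝ) : ℝ :=
  deriv (leftRLI a (1 - α) g) x

/-- Right Riemann–Liouville fractional derivative `(ₓD_b^α g)(x) = -d/dx (ₓI_b^{1-α} g)(x)`. -/
def rlRightD (b α : ℝ) (g : ℝ → ℝ) (x : ℝ) : ℝ :=
  -deriv (rightRLI b (1 - α) g) x

/-- Combined Caputo fractional derivative `ᶜD_γ^{α,β} f = γ ᶜₐDₓ^α f + (1-γ) ᶜₓD_b^β f`. -/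
def combCaputo (a b α β γ : ℝ) (f : ℝ → ℝ) (x : ℝ) : ℝ :=
  γ * caputoLeft a α f x + (1 - γ) * caputoRight b β f x

/-- Combined Riemann–Liouville derivative `D_{1-γ}^{β,α} g = (1-γ) ₐDₓ^β g + γ ₓD_b^α g`. -/
def combRL (a b α β γ : ℝ) (g : ℝ → ℝ) (x : ℝ) : ℝ :=
  (1 - γ) * rlLeftD a β g x + γ * rlRightD b α g x

/-- Componentwise combined Caputo derivative of a vector-valued function. -/
def combCaputoVec (a b α β γ : ℝ) {N : ℕ} (y : ℝ → Fin N → ℝ) (x : ℝ) : Fin N → ℝ :=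
  fun i => combCaputo a b α β γ (fun t => y t i) x

/-- The class `𝐃` of trajectories: each component absolutely continuous on `[a,b]` and the
combined Caputo derivative exists and is continuous on `[a,b]`. -/
def memD (a b α β γ : ℝ) {N : ℕ} (y : ℝ → Fin N → ℝ) : Prop :=
  (∀ i, AbsolutelyContinuousOn (fun t => y t i) a b) ∧
    ∀ i, ContinuousOn (fun x => combCaputo a b α β γ (fun t => y t i) x) (Icc a b)

/-- The norm `‖y‖_{1,∞} = max_{[a,b]} ‖y(x)‖ + max_{[a,b]} ‖ᶜD_γ^{α,β} y(x)‖`. -/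
def norm1inf (a b α β γ : ℝ) {N : ℕ} (y : ℝ → Fin N → ℝ) : ℝ :=
  sSup ((fun x => ‖y x‖) '' Icc a b) +
    sSup ((fun x => ‖combCaputoVec a b α β γ y x‖) '' Icc a b)

/-- Partial derivative of a Lagrangian `L(x, y, v)` w.r.t. the `i`-th component of `y`. -/
def pdY {N : ℕ} (L : ℝ → (Fin N → ℝ) → (Fin N → ℝ) → ℝ) (i : Fin N) (x : ℝ)
    (u v : Fin N → ℝ) : ℝ :=
  deriv (fun s => L x (Function.update u i s) v) (u i)

/-- Partial derivative of a Lagrangian `L(x, y, v)` w.r.t. the `i`-th component of `v`. -/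
def pdV {N : ℕ} (L : ℝ → (Fin N → ℝ) → (Fin N → ℝ) → ℝ) (i : Fin N) (x : ℝ)
    (u v : Fin N → ℝ) : ℝ :=
  deriv (fun s => L x u (Function.update v i s)) (v i)

theorem AbsolutelyContinuousOnInterval.congr_eqOn {f g : ℝ → ℝ} {a b : ℝ}
    (hf : AbsolutelyContinuousOnInterval f a b) (hfg : EqOn f g (uIcc a b)) :
    AbsolutelyContinuousOnInterval g a b := by
  rw [absolutelyContinuousOnInterval_iff] at hf ⊢
  intro ε hε
  obtain ⟨δ, hδ, h⟩ := hf ε hε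
  refine ⟨δ, hδ, fun E hE hlt => ?_⟩
  have hsum : ∑ i ∈ Finset.range E.1, dist (g (E.2 i).1) (g (E.2 i).2) =
      ∑ i ∈ Finset.range E.1, dist (f (E.2 i).1) (f (E.2 i).2) :=
    Finset.sum_congr rfl fun i hi => by rw [hfg (hE.1 i hi).1, hfg (hE.1 i hi).2]
  rw [hsum]
  exact h E hE hlt

theorem absolutelyContinuousOnInterval_const (c a b : ℝ) :
    AbsolutelyContinuousOnInterval (fun _ => c) a b :=
  (LipschitzWith.const c).lipschitzOnWith.absolutelyContinuousOnInterval

theorem AbsolutelyContinuousOn.absolutelyContinuousOnInterval {f : ℝ → ℝ} {a b : ℝ}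
    (hab : a ≤ b) (hf : AbsolutelyContinuousOn f a b) :
    AbsolutelyContinuousOnInterval f a b := by
  refine ((absolutelyContinuousOnInterval_const (f a) a b).add
    (hf.1.absolutelyContinuousOnInterval_intervalIntegral left_mem_uIcc)).congr_eqOn fun x hx => ?_
  rw [uIcc_of_le hab] at hx
  exact (hf.2 x hx).symm

/-- The Abel kernel `s ↦ s ^ (-α)` truncated to `(0, L]`. -/
def abelKernel (L α : ℝ) : ℝ → ℝ :=
  (Ioc 0 L).indicator fun s => s ^ (-α)

theorem integrable_abelKernel (L : ℝ) {α : ℝ} (hα1 : α < 1) :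
    Integrable (abelKernel L α) := by
  rw [abelKernel, integrable_indicator_iff measurableSet_Ioc]
  exact (intervalIntegral.intervalIntegrable_rpow' (by linarith)).1

theorem integral_right_eq_integral_abelKernel {a b x : ℝ} (α : ℝ) (hx : x ∈ Icc a b)
    {φ : ℝ → ℝ} (hφ : ∀ y, b < y → φ y = 0) :
    ∫ y in x..b, (y - x) ^ (-α) * φ y = ∫ y, abelKernel (b - a) α (y - x) * φ y := by
  rw [intervalIntegral.integral_of_le hx.2, ← integral_indicator measurableSet_Ioc]
  congr 1 with y
  by_cases h : y ∈ Ioc x b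
  · have : y - x ∈ Ioc 0 (b - a) := ⟨by linarith [h.1], by linarith [h.2, hx.1]⟩
    simp [abelKernel, h, this]
  · rw [indicator_of_notMem h]
    rcases le_or_gt y b with hy | hy
    · have : y - x ∉ Ioc 0 (b - a) := fun h' => h ⟨by linarith [h'.1], hy⟩
      simp [abelKernel, this]
    · simp [hφ y hy]

theorem integral_left_eq_integral_abelKernel {a b x α : ℝ} (hα : α ≠ 0) (hx : x ∈ Icc a b)
    {φ : ℝ → ℝ} (hφ : ∀ t, t ≤ a → φ t = 0) :
    ∫ t in a..x, (x - t) ^ (-α) * φ t = ∫ t, abelKernel (b - a) α (x - t) * φ t := by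
  rw [intervalIntegral.integral_of_le hx.1, ← integral_indicator measurableSet_Ioc]
  congr 1 with t
  by_cases h : t ∈ Ioc a x
  · rw [indicator_of_mem h]
    rcases h.2.eq_or_lt with rfl | hlt
    · simp [abelKernel, hα]
    · have : x - t ∈ Ioc 0 (b - a) := ⟨by linarith, by linarith [h.1, hx.2]⟩
      simp [abelKernel, this]
  · rw [indicator_of_notMem h]
    rcases le_or_gt t a with ht | ht
    · simp [hφ t ht]
    · have : x - t ∉ Ioc 0 (b - a) := fun h' => h ⟨ht, by linarith [h'.1]⟩
      simp [abelKernel, this]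

/-- Dirichlet's formula for the Abel kernel. -/
theorem integral_mul_abel_integral_swap {a b α : ℝ} (hab : a ≤ b) (hα0 : α ≠ 0) (hα1 : α < 1)
    {φ ψ : ℝ → ℝ} (hφ : IntervalIntegrable φ volume a b) (hψ : ContinuousOn ψ (Icc a b)) :
    ∫ x in a..b, ψ x * ∫ t in a..x, (x - t) ^ (-α) * φ t =
      ∫ t in a..b, φ t * ∫ x in t..b, (x - t) ^ (-α) * ψ x := by
  set Φ := (Ioc a b).indicator φ with hΦ
  set Ψ := (Ioc a b).indicator ψ with hΨ
  have hΦi : Integrable Φ := (integrable_indicator_iff measurableSet_Ioc).2 hφ.1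
  have hΨm : AEStronglyMeasurable Ψ :=
    (aestronglyMeasurable_indicator_iff measurableSet_Ioc).2
      ((hψ.mono Ioc_subset_Icc_self).aestronglyMeasurable measurableSet_Ioc)
  obtain ⟨C, hC⟩ := isCompact_Icc.exists_bound_of_continuousOn hψ
  have hΨb : ∀ x, ‖Ψ x‖ ≤ max C 0 := fun x => by
    by_cases h : x ∈ Ioc a b
    · simpa [hΨ, h] using Or.inl (hC x (Ioc_subset_Icc_self h))
    · simp [hΨ, h]
  have hint : Integrable
      (Function.uncurry fun x t => Ψ x * (Φ t * abelKernel (b - a) α (x - t)))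
      (volume.prod volume) :=
    (hΦi.convolution_integrand (ContinuousLinearMap.mul ℝ ℝ)
      (integrable_abelKernel (b - a) hα1)).bdd_mul hΨm.comp_fst (.of_forall fun p => hΨb p.1)
  have hleft : ∫ x in a..b, ψ x * ∫ t in a..x, (x - t) ^ (-α) * φ t =
      ∫ x, ∫ t, Ψ x * (Φ t * abelKernel (b - a) α (x - t)) := by
    rw [intervalIntegral.integral_of_le hab, ← integral_indicator measurableSet_Ioc]
    congr 1 with x
    rw [integral_const_mul]
    by_cases h : x ∈ Ioc a b
    · rw [indicator_of_mem h, hΨ, indicator_of_mem h]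
      simp_rw [mul_comm (Φ _)]
      rw [← integral_left_eq_integral_abelKernel hα0 (Ioc_subset_Icc_self h)
        (fun t ht => by simp [hΦ, ht.not_gt])]
      congr 1
      refine intervalIntegral.integral_congr_ae (.of_forall fun t ht => ?_)
      rw [uIoc_of_le h.1.le] at ht
      have : t ∈ Ioc a b := ⟨ht.1, ht.2.trans h.2⟩
      simp [hΦ, this]
    · simp [hΨ, h]
  have hright : ∫ t in a..b, φ t * ∫ x in t..b, (x - t) ^ (-α) * ψ x =
      ∫ t, ∫ x, Ψ x * (Φ t * abelKernel (b - a) α (x - t)) := by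
    rw [intervalIntegral.integral_of_le hab, ← integral_indicator measurableSet_Ioc]
    congr 1 with t
    have hcomm : ∀ x, Ψ x * (Φ t * abelKernel (b - a) α (x - t)) =
        Φ t * (abelKernel (b - a) α (x - t) * Ψ x) := fun x => by ring
    simp_rw [hcomm]
    rw [integral_const_mul]
    by_cases h : t ∈ Ioc a b
    · rw [indicator_of_mem h, hΦ, indicator_of_mem h,
        ← integral_right_eq_integral_abelKernel α (Ioc_subset_Icc_self h)
        (fun y hy => by simp [hΨ, hy.not_ge])]
      congr 1
      refine intervalIntegral.integral_congr_ae (.of_forall fun x hx => ?_)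
      rw [uIoc_of_le h.2] at hx
      have : x ∈ Ioc a b := ⟨h.1.trans hx.1, hx.2⟩
      simp [hΨ, this]
    · simp [hΦ, h]
  rw [hleft, hright]
  exact integral_integral_swap hint

/-- The integral against an integrable kernel of the tails of an integrable function is again
a tail integral. -/
theorem integral_mul_integral_Ioi_comp_add {K G : ℝ → ℝ} (hK : Integrable K) (hG : Integrable G) :
    Integrable (fun u => ∫ s, K s * G (s + u)) ∧
      ∀ x, ∫ y, K (y - x) * ∫ v in Ioi y, G v = ∫ u in Ioi x, ∫ s, K s * G (s + u) := by
  have hint : Integrable (Function.uncurry fun s u => K s * G (s + u)) (volume.prod volume) :=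
    (measurePreserving_prod_add (volume : Measure ℝ)
      (volume : Measure ℝ)).integrable_comp_of_integrable (hK.mul_prod hG)
  refine ⟨hint.integral_prod_right, fun x => ?_⟩
  have hshift : ∫ y, K (y - x) * ∫ v in Ioi y, G v = ∫ s, K s * ∫ v in Ioi (s + x), G v := by
    rw [← integral_sub_right_eq_self (fun s => K s * ∫ v in Ioi (s + x), G v) x]
    simp
  rw [hshift, ← integral_integral_swap (hint.mono_measure
    (Measure.prod_mono le_rfl Measure.restrict_le_self))]
  congr 1 with s
  rw [integral_const_mul]
  congr 1
  rw [← integral_indicator measurableSet_Ioi, ← integral_indicator measurableSet_Ioi,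
    ← integral_add_left_eq_self _ s]
  congr 1 with u
  simp [indicator]

theorem absolutelyContinuousOnInterval_abel_integral_right {a b α : ℝ} (hab : a ≤ b) (hα1 : α < 1)
    {g : ℝ → ℝ} (hg : AbsolutelyContinuousOn g a b) :
    AbsolutelyContinuousOnInterval (fun x => ∫ t in x..b, (t - x) ^ (-α) * g t) a b := by
  set G := (Ioc a b).indicator (deriv g) with hG
  have hGi : Integrable G := (integrable_indicator_iff measurableSet_Ioc).2 hg.1.1
  have htail : ∀ y ∈ Icc a b, ∫ v in Ioi y, G v = g b - g y := by
    intro y hy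
    have hinter : Ioi y ∩ Ioc a b = Ioc y b := by
      ext v
      simp only [mem_inter_iff, mem_Ioi, mem_Ioc]
      exact ⟨fun h => ⟨h.1, h.2.2⟩, fun h => ⟨h.1, hy.1.trans_lt h.1, h.2⟩⟩
    rw [hg.2 b (right_mem_Icc.2 hab), hg.2 y hy, add_sub_add_left_eq_sub,
      intervalIntegral.integral_interval_sub_left hg.1 (hg.1.mono_set (by
        rw [uIcc_of_le hab, uIcc_of_le hy.1]; exact Icc_subset_Icc_right hy.2)),
      intervalIntegral.integral_of_le hy.2, hG, setIntegral_indicator measurableSet_Ioc,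
      hinter]
  have htail_zero : ∀ y, b < y → ∫ v in Ioi y, G v = 0 := fun y hy =>
    setIntegral_eq_zero_of_forall_eq_zero fun v hv => by
      simp [hG, (hy.trans hv).not_ge]
  obtain ⟨hHi, hH⟩ := integral_mul_integral_Ioi_comp_add (integrable_abelKernel (b - a) hα1) hGi
  set H := fun u => ∫ s, abelKernel (b - a) α s * G (s + u)
  have hpow : ∀ x, IntervalIntegrable (fun t => (t - x) ^ (-α)) volume x b := fun x => by
    simpa using (intervalIntegral.intervalIntegrable_rpow' (a := 0) (b := b - x)
      (r := -α) (by linarith)).comp_sub_right x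
  have hpow' : IntervalIntegrable (fun t => (b - t) ^ (-α)) volume a b := by
    simpa using (intervalIntegral.intervalIntegrable_rpow' (a := b - a) (b := 0)
      (r := -α) (by linarith)).comp_sub_left b
  have hcont := (hg.absolutelyContinuousOnInterval hab).continuousOn
  rw [uIcc_of_le hab] at hcont
  refine ((((hpow'.absolutelyContinuousOnInterval_intervalIntegral right_mem_uIcc).const_mul
    (-g b)).add ((hHi.intervalIntegrable (a := a)
      (b := b)).absolutelyContinuousOnInterval_intervalIntegral left_mem_uIcc)).sub
    (absolutelyContinuousOnInterval_const (∫ u in Ioi a, H u) a b)).congr_eqOn fun x hx => ?_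
  rw [uIcc_of_le hab] at hx
  have hsplit : ∫ t in x..b, (t - x) ^ (-α) * g t = (∫ t in x..b, (t - x) ^ (-α) * g b) -
      ∫ t in x..b, (t - x) ^ (-α) * ∫ v in Ioi t, G v := by
    rw [← intervalIntegral.integral_sub ((hpow x).mul_const _)]
    · refine intervalIntegral.integral_congr fun t ht => ?_
      rw [uIcc_of_le hx.2] at ht
      simp only [htail t ⟨hx.1.trans ht.1, ht.2⟩]
      ring
    · refine (hpow x).mul_continuousOn ?_
      rw [uIcc_of_le hx.2]
      exact (continuousOn_const.sub (hcont.mono (Icc_subset_Icc_left hx.1))).congr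
        fun t ht => htail t ⟨hx.1.trans ht.1, ht.2⟩
  have hreflect : ∫ t in x..b, (t - x) ^ (-α) = ∫ t in x..b, (b - t) ^ (-α) := by
    rw [intervalIntegral.integral_comp_sub_right (fun s => s ^ (-α)),
      intervalIntegral.integral_comp_sub_left (fun s => s ^ (-α))]
    simp
  simp only [Pi.add_apply, Pi.sub_apply]
  rw [hsplit, integral_right_eq_integral_abelKernel α hx htail_zero, hH,
    intervalIntegral.integral_mul_const, hreflect, intervalIntegral.integral_symm x b,
    ← intervalIntegral.integral_Ioi_sub_Ioi hHi.integrableOn hx.1]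
  ring

/-- Fractional integration by parts for the left Caputo derivative:
`∫_a^b g (ᶜₐDₓ^α f) dx = [f · ₓI_b^{1-α} g]_a^b + ∫_a^b f (ₓD_b^α g) dx`. -/
theorem caputo_left_integration_by_parts
    (a b α : ℝ) (hab : a < b) (hα0 : 0 < α) (hα1 : α < 1)
    (f g : ℝ → ℝ)
    (hf : AbsolutelyContinuousOn f a b) (hg : AbsolutelyContinuousOn g a b) :
    ∫ x in a..b, g x * caputoLeft a α f x =
      (f b * rightRLI b (1 - α) g b - f a * rightRLI b (1 - α) g a) +
        ∫ x in a..b, f x * rlRightD b α g x := by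
  have hexp : (1 - α) - 1 = -α := by ring
  have hJ := (absolutelyContinuousOnInterval_abel_integral_right hab.le hα1 hg).const_mul
    (1 / Real.Gamma (1 - α))
  have hI : rightRLI b (1 - α) g =
      fun x => 1 / Real.Gamma (1 - α) * ∫ t in x..b, (t - x) ^ (-α) * g t := by
    funext x
    rw [rightRLI, hexp]
  rw [← hI] at hJ
  have hcont := (hg.absolutelyContinuousOnInterval hab.le).continuousOn
  rw [uIcc_of_le hab.le] at hcont
  have hswap := integral_mul_abel_integral_swap hab.le hα0.ne' hα1 hf.1 hcont
  have hparts := (hf.absolutelyContinuousOnInterval hab.le).integral_mul_deriv_eq_deriv_mul hJ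
  have hlhs : ∫ x in a..b, g x * caputoLeft a α f x =
      ∫ x in a..b, deriv f x * rightRLI b (1 - α) g x := by
    simp_rw [caputoLeft, hI, mul_left_comm _ (1 / Real.Gamma (1 - α))]
    rw [intervalIntegral.integral_const_mul, intervalIntegral.integral_const_mul, hswap]
  simp_rw [rlRightD, mul_neg]
  rw [intervalIntegral.integral_neg, hparts, hlhs]
  ring
end
end

section
/- Let a < b be real numbers and 0 < α < 1. If f and g are absolutely continuous on [a,b], then ∫_a^b g(x)·(C_xD_b^α f)(x) dx = −[f(x)·(aI_x^{1−α} g)(x)]_{x=a}^{x=b} + ∫_a^b f(x)·(aD_x^α g)(x) dx, where the left Riemann–Liouville fractional derivative aD_x^α g exists almost everywhere and the boundary term denotes the difference of the values at x = b and x = a. -/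
open MeasureTheory Set Real

noncomputable section

lemma intervalIntegrable_sub_left_rpow {α : ℝ} (hα1 : α < 1) (a x : ℝ) :
    IntervalIntegrable (fun t => (x - t) ^ (-α)) volume a x := by
  simpa using (intervalIntegral.intervalIntegrable_rpow' (a := x - a) (b := 0)
    (r := -α) (by linarith)).comp_sub_left x

lemma intervalIntegrable_sub_right_rpow {α : ℝ} (hα1 : α < 1) (a x : ℝ) :
    IntervalIntegrable (fun t => (t - a) ^ (-α)) volume a x := by
  simpa using (intervalIntegral.intervalIntegrable_rpow' (a := 0) (b := x - a)
    (r := -α) (by linarith)).comp_sub_right a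

lemma setIntegral_indicator_snd_lt_fst {a b x : ℝ} (Φ : ℝ → ℝ → ℝ) (hx : x ∈ Ioc a b) :
    ∫ r in Ioc a b, {p : ℝ × ℝ | p.2 < p.1}.indicator (Function.uncurry Φ) (x, r) =
      ∫ r in a..x, Φ x r := by
  have : (fun r => {p : ℝ × ℝ | p.2 < p.1}.indicator (Function.uncurry Φ) (x, r)) =
      (Iio x).indicator (Φ x) := by
    ext r
    simp [indicator]
  rw [this, setIntegral_indicator measurableSet_Iio, intervalIntegral.integral_of_le hx.1.le,
    integral_Ioc_eq_integral_Ioo]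
  congr 2
  ext r
  simp only [mem_Ioo, mem_inter_iff, mem_Ioc, mem_Iio]
  exact ⟨fun h => ⟨h.1.1, h.2⟩, fun h => ⟨⟨h.1, h.2.le.trans hx.2⟩, h.2⟩⟩

/-- Dirichlet's formula: interchange of the order of integration over a triangle. -/
lemma integral_integral_triangle_swap {a b : ℝ} (hab : a ≤ b) {Φ : ℝ → ℝ → ℝ}
    (h : Integrable ({p : ℝ × ℝ | p.2 < p.1}.indicator (Function.uncurry Φ))
      ((volume.restrict (Ioc a b)).prod (volume.restrict (Ioc a b)))) :
    ∫ x in a..b, ∫ r in a..x, Φ x r = ∫ r in a..b, ∫ x in r..b, Φ x r := by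
  rw [intervalIntegral.integral_of_le hab, intervalIntegral.integral_of_le hab]
  have hright : ∀ r ∈ Ioc a b, ∫ x in r..b, Φ x r =
      ∫ x in Ioc a b, {p : ℝ × ℝ | p.2 < p.1}.indicator (Function.uncurry Φ) (x, r) := by
    intro r hr
    have : (fun x => {p : ℝ × ℝ | p.2 < p.1}.indicator (Function.uncurry Φ) (x, r)) =
        (Ioi r).indicator (fun x => Φ x r) := by
      ext x
      simp [indicator]
    rw [this, setIntegral_indicator measurableSet_Ioi, intervalIntegral.integral_of_le hr.2]
    congr 2
    ext x
    simp only [mem_Ioi, mem_inter_iff, mem_Ioc]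
    exact ⟨fun h => ⟨⟨hr.1.trans h.1, h.2⟩, h.1⟩, fun h => ⟨h.2, h.1.2⟩⟩
  rw [setIntegral_congr_fun measurableSet_Ioc fun x hx =>
      (setIntegral_indicator_snd_lt_fst Φ hx).symm,
    setIntegral_congr_fun measurableSet_Ioc hright]
  exact integral_integral_swap
    (f := fun x r => {p : ℝ × ℝ | p.2 < p.1}.indicator (Function.uncurry Φ) (x, r)) h

lemma integrable_indicator_rpow_sub_mul {a b α : ℝ} (hab : a ≤ b) (hα1 : α < 1) {u : ℝ → ℝ}
    (hu : IntervalIntegrable u volume a b) :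
    Integrable ({p : ℝ × ℝ | p.2 < p.1}.indicator
        (Function.uncurry fun x r => (x - r) ^ (-α) * u r))
      ((volume.restrict (Ioc a b)).prod (volume.restrict (Ioc a b))) := by
  have hk : Integrable ((Ioc 0 (b - a)).indicator fun s : ℝ => s ^ (-α)) := by
    rw [integrable_indicator_iff measurableSet_Ioc,
      ← intervalIntegrable_iff_integrableOn_Ioc_of_le (by linarith)]
    exact intervalIntegral.intervalIntegrable_rpow' (by linarith)
  have hu' : Integrable ((Ioc a b).indicator u) := by
    rw [integrable_indicator_iff measurableSet_Ioc]
    exact hu.1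
  have key := hu'.convolution_integrand (ContinuousLinearMap.mul ℝ ℝ) hk
  have key' := key.integrableOn (s := Ioc a b ×ˢ Ioc a b)
  rw [Measure.prod_restrict]
  refine key'.congr_fun ?_ (measurableSet_Ioc.prod measurableSet_Ioc)
  rintro ⟨x, r⟩ ⟨hx, hr⟩
  simp only [mem_Ioc] at hx hr
  by_cases h : r < x
  · have : 0 < x - r ∧ x - r ≤ b - a := ⟨by linarith, by linarith⟩
    simp [indicator, h, hr, Function.uncurry, mul_comm]
    intro h'
    linarith
  · simp [indicator, h]

lemma integrable_indicator_rpow_sub_mul_fst {a b α : ℝ} (hab : a ≤ b) (hα1 : α < 1) {u : ℝ → ℝ}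
    (hu : IntervalIntegrable u volume a b) :
    Integrable ({p : ℝ × ℝ | p.2 < p.1}.indicator
        (Function.uncurry fun x r => (x - r) ^ (-α) * u x))
      ((volume.restrict (Ioc a b)).prod (volume.restrict (Ioc a b))) := by
  have hu' : IntervalIntegrable (fun t => u (a + b - t)) volume a b := by
    simpa using (hu.comp_sub_left (a + b)).symm
  have hrefl : MeasurePreserving (fun t : ℝ => a + b - t) (volume.restrict (Ioc a b))
      (volume.restrict (Ioc a b)) := by
    have := (Measure.measurePreserving_sub_left volume (a + b)).restrict_preimage
      (s := Ico a b) measurableSet_Ico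
    rwa [preimage_const_sub_Ico, add_sub_cancel_right, add_sub_cancel_left,
      restrict_Ico_eq_restrict_Ioc] at this
  have := ((hrefl.prod hrefl).integrable_comp_of_integrable
    (integrable_indicator_rpow_sub_mul hab hα1 hu')).swap
  refine this.congr ?_
  filter_upwards with p
  simp [indicator, Function.uncurry]

/-- The Riemann–Liouville type integral of an integrable function is integrable. -/
lemma intervalIntegrable_integral_rpow_sub_mul {a b α : ℝ} (hab : a ≤ b) (hα1 : α < 1)
    {u : ℝ → ℝ} (hu : IntervalIntegrable u volume a b) :
    IntervalIntegrable (fun x => ∫ r in a..x, (x - r) ^ (-α) * u r) volume a b := by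
  rw [intervalIntegrable_iff_integrableOn_Ioc_of_le hab]
  refine IntegrableOn.congr_fun
    (integrable_indicator_rpow_sub_mul hab hα1 hu).integral_prod_left ?_ measurableSet_Ioc
  exact fun x hx => setIntegral_indicator_snd_lt_fst _ hx

/-- The fractional kernel integral of an indefinite integral is again an indefinite integral. -/
lemma integral_rpow_sub_mul_integral {a b α : ℝ} (hab : a ≤ b) (hα1 : α < 1)
    {u : ℝ → ℝ} (hu : IntervalIntegrable u volume a b) :
    ∫ x in a..b, (b - x) ^ (-α) * ∫ r in a..x, u r =
      ∫ x in a..b, ∫ r in a..x, (x - r) ^ (-α) * u r := by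
  rw [integral_integral_triangle_swap hab (integrable_indicator_rpow_sub_mul hab hα1 hu)]
  simp_rw [← intervalIntegral.integral_const_mul]
  have hk : IntervalIntegrable (fun x => (b - x) ^ (-α)) volume a b :=
    intervalIntegrable_sub_left_rpow hα1 a b
  rw [integral_integral_triangle_swap hab]
  · refine intervalIntegral.integral_congr fun r _ => ?_
    simp only [intervalIntegral.integral_mul_const]
    congr 1
    rw [intervalIntegral.integral_comp_sub_left (fun y => y ^ (-α)) b,
      intervalIntegral.integral_comp_sub_right (fun y => y ^ (-α)) r]
    simp
  · exact (Integrable.mul_prod hk.1 hu.1).indicator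
      (measurableSet_lt measurable_snd measurable_fst)

/-- The indefinite-integral representation of the kernel integral of an absolutely continuous
function. -/
lemma AbsolutelyContinuousOn.integral_rpow_sub_mul {a b α : ℝ} (hα1 : α < 1) {g : ℝ → ℝ}
    (hg : AbsolutelyContinuousOn g a b) {x : ℝ} (hx : x ∈ Icc a b) :
    ∫ t in a..x, (x - t) ^ (-α) * g t =
      ∫ s in a..x, ((s - a) ^ (-α) * g a + ∫ r in a..s, (s - r) ^ (-α) * deriv g r) := by
  have hu : IntervalIntegrable (deriv g) volume a x :=
    hg.1.mono_set (by
      rw [uIcc_of_le hx.1, uIcc_of_le (hx.1.trans hx.2)]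
      exact Icc_subset_Icc_right hx.2)
  have hk : IntervalIntegrable (fun t => (x - t) ^ (-α)) volume a x :=
    intervalIntegrable_sub_left_rpow hα1 a x
  have hk' : IntervalIntegrable (fun t => (t - a) ^ (-α)) volume a x :=
    intervalIntegrable_sub_right_rpow hα1 a x
  rw [intervalIntegral.integral_add (hk'.mul_const _)
      (intervalIntegrable_integral_rpow_sub_mul hx.1 hα1 hu),
    ← integral_rpow_sub_mul_integral hx.1 hα1 hu, intervalIntegral.integral_mul_const,
    intervalIntegral.integral_comp_sub_right (fun y => y ^ (-α)) a, sub_self]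
  have hkk : ∫ t in a..x, (x - t) ^ (-α) = ∫ y in (0:ℝ)..(x - a), y ^ (-α) := by
    rw [intervalIntegral.integral_comp_sub_left (fun y => y ^ (-α)) x, sub_self]
  rw [← hkk, ← intervalIntegral.integral_mul_const, ← intervalIntegral.integral_add
    (hk.mul_const _)]
  · refine intervalIntegral.integral_congr fun t ht => ?_
    rw [uIcc_of_le hx.1] at ht
    rw [hg.2 t ⟨ht.1, ht.2.trans hx.2⟩]
    ring
  · refine hk.mul_continuousOn ?_
    exact intervalIntegral.continuousOn_primitive_interval' hu left_mem_uIcc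

lemma AbsolutelyContinuousOn.continuousOn {a b : ℝ} {f : ℝ → ℝ} (hab : a ≤ b)
    (hf : AbsolutelyContinuousOn f a b) : ContinuousOn f (Icc a b) := by
  have := intervalIntegral.continuousOn_primitive_interval' hf.1 left_mem_uIcc
  rw [uIcc_of_le hab] at this
  exact (continuousOn_const.add this).congr hf.2

/-- Fubini for the fractional kernel paired with a bounded and an integrable function. -/
lemma integral_mul_integral_rpow_sub {a b α : ℝ} (hab : a ≤ b) (hα1 : α < 1) {g u : ℝ → ℝ}
    (hg : ContinuousOn g (Icc a b)) (hu : IntervalIntegrable u volume a b) :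
    ∫ x in a..b, g x * ∫ t in x..b, (t - x) ^ (-α) * u t =
      ∫ t in a..b, u t * ∫ x in a..t, (t - x) ^ (-α) * g x := by
  simp_rw [← intervalIntegral.integral_const_mul]
  have hint : Integrable ({p : ℝ × ℝ | p.2 < p.1}.indicator
        (Function.uncurry fun t x => u t * ((t - x) ^ (-α) * g x)))
      ((volume.restrict (Ioc a b)).prod (volume.restrict (Ioc a b))) := by
    obtain ⟨C, hC⟩ := isCompact_Icc.exists_bound_of_continuousOn hg
    have hgm : AEStronglyMeasurable (fun p : ℝ × ℝ => g p.2)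
        ((volume.restrict (Ioc a b)).prod (volume.restrict (Ioc a b))) :=
      ((hg.mono Ioc_subset_Icc_self).aestronglyMeasurable measurableSet_Ioc).comp_snd
    have hgb : ∀ᵐ p : ℝ × ℝ ∂((volume.restrict (Ioc a b)).prod (volume.restrict (Ioc a b))),
        ‖g p.2‖ ≤ C := by
      rw [Measure.prod_restrict]
      filter_upwards [ae_restrict_mem (measurableSet_Ioc.prod measurableSet_Ioc)] with p hp
      exact hC _ (Ioc_subset_Icc_self hp.2)
    refine ((integrable_indicator_rpow_sub_mul_fst hab hα1 hu).mul_bdd hgm hgb).congr ?_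
    filter_upwards with p
    simp only [indicator, Function.uncurry]
    split_ifs <;> ring
  rw [integral_integral_triangle_swap hab hint]
  refine intervalIntegral.integral_congr fun x _ => ?_
  refine intervalIntegral.integral_congr fun t _ => ?_
  ring

/-- Fractional integration by parts for the right Caputo derivative:
`∫_a^b g (ᶜₓD_b^α f) dx = -[f · ₐIₓ^{1-α} g]_a^b + ∫_a^b f (ₐDₓ^α g) dx`. -/
theorem caputo_right_integration_by_parts
    (a b α : ℝ) (hab : a < b) (hα0 : 0 < α) (hα1 : α < 1)
    (f g : ℝ → ℝ)
    (hf : AbsolutelyContinuousOn f a b) (hg : AbsolutelyContinuousOn g a b) :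
    ∫ x in a..b, g x * caputoRight b α f x =
      -(f b * leftRLI a (1 - α) g b - f a * leftRLI a (1 - α) g a) +
        ∫ x in a..b, f x * rlLeftD a α g x := by
  have hab' := hab.le
  set h : ℝ → ℝ := fun s =>
    (s - a) ^ (-α) * g a + ∫ r in a..s, (s - r) ^ (-α) * deriv g r
  set c : ℝ := 1 / Real.Gamma (1 - α) with hc
  have hI : ∀ x, leftRLI a (1 - α) g x = c * ∫ t in a..x, (x - t) ^ (-α) * g t := by
    intro x
    rw [leftRLI, sub_sub_cancel_left]
  have hIH : ∀ x ∈ Icc a b, leftRLI a (1 - α) g x = c * ∫ s in a..x, h s := fun x hx => by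
    rw [hI, hg.integral_rpow_sub_mul hα1 hx]
  have hint : IntervalIntegrable h volume a b :=
    IntervalIntegrable.add ((intervalIntegrable_sub_right_rpow hα1 a b).mul_const _)
      (intervalIntegrable_integral_rpow_sub_mul hab' hα1 hg.1)
  have hH : AbsolutelyContinuousOnInterval (fun x => c * ∫ s in a..x, h s) a b :=
    (hint.absolutelyContinuousOnInterval_intervalIntegral left_mem_uIcc).const_mul c
  have hF : AbsolutelyContinuousOnInterval (fun x => f a + ∫ t in a..x, deriv f t) a b :=
    (LipschitzWith.const (f a)).lipschitzOnWith.absolutelyContinuousOnInterval.add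
      (hf.1.absolutelyContinuousOnInterval_intervalIntegral left_mem_uIcc)
  have hparts := hF.integral_mul_deriv_eq_deriv_mul hH
  have hright : ∫ x in a..b, f x * rlLeftD a α g x =
      ∫ x in a..b, (f a + ∫ t in a..x, deriv f t) * deriv (fun x => c * ∫ s in a..x, h s) x := by
    refine intervalIntegral.integral_congr_Ioo_of_le hab' fun x hx => ?_
    have hev : leftRLI a (1 - α) g =ᶠ[nhds x] fun x => c * ∫ s in a..x, h s :=
      Filter.mem_of_superset (Icc_mem_nhds hx.1 hx.2) hIH
    simp only [rlLeftD]
    rw [hev.deriv_eq, ← hf.2 x (Ioo_subset_Icc_self hx)]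
  have hleft : ∫ x in a..b, g x * caputoRight b α f x = -∫ x in a..b,
      deriv (fun x => f a + ∫ t in a..x, deriv f t) x * (c * ∫ s in a..x, h s) := by
    calc ∫ x in a..b, g x * caputoRight b α f x
        = ∫ x in a..b, -c * (g x * ∫ t in x..b, (t - x) ^ (-α) * deriv f t) := by
          refine intervalIntegral.integral_congr fun x _ => ?_
          simp only [caputoRight, ← hc]
          ring
      _ = -∫ x in a..b, deriv f x * (c * ∫ t in a..x, (x - t) ^ (-α) * g t) := by
          rw [intervalIntegral.integral_const_mul,
            integral_mul_integral_rpow_sub hab' hα1 (hg.continuousOn hab') hf.1, neg_mul,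
            ← intervalIntegral.integral_const_mul]
          simp_rw [mul_left_comm]
      _ = _ := by
          congr 1
          refine intervalIntegral.integral_congr_Ioo_of_le hab' fun x hx => ?_
          have hev : f =ᶠ[nhds x] fun x => f a + ∫ t in a..x, deriv f t :=
            Filter.mem_of_superset (Icc_mem_nhds hx.1 hx.2) hf.2
          rw [← hev.deriv_eq, ← hIH x (Ioo_subset_Icc_self hx), hI]
  rw [hleft, hright, hparts, ← hf.2 b (right_mem_Icc.2 hab'), ← hf.2 a (left_mem_Icc.2 hab'),
    ← hIH b (right_mem_Icc.2 hab'), ← hIH a (left_mem_Icc.2 hab')]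
  ring
end
end

section
/- Let a < b be real numbers, α, β ∈ (0,1) and γ ∈ [0,1]. If f and g are absolutely continuous on [a,b], then ∫_a^b g(x)·(C D_γ^{α,β} f)(x) dx = γ·[f(x)·(xI_b^{1−α} g)(x)]_{x=a}^{x=b} − (1−γ)·[f(x)·(aI_x^{1−β} g)(x)]_{x=a}^{x=b} + ∫_a^b f(x)·(D_{1−γ}^{β,α} g)(x) dx, where the Riemann–Liouville derivatives of g appearing in D_{1−γ}^{β,α} g exist almost everywhere. -/
open MeasureTheory Set Real

noncomputable section

/-- The open-closed triangle `a < s < t ≤ b` in the plane. -/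
def orderedTriangle (a b : ℝ) : Set (ℝ × ℝ) :=
  {p | a < p.1 ∧ p.1 < p.2 ∧ p.2 ≤ b}

theorem measurableSet_orderedTriangle (a b : ℝ) : MeasurableSet (orderedTriangle a b) := by
  have h1 : MeasurableSet {p : ℝ × ℝ | a < p.1} := measurableSet_lt measurable_const measurable_fst
  have h2 : MeasurableSet {p : ℝ × ℝ | p.1 < p.2} := measurableSet_lt measurable_fst measurable_snd
  have h3 : MeasurableSet {p : ℝ × ℝ | p.2 ≤ b} := measurableSet_le measurable_snd measurable_const
  exact h1.inter (h2.inter h3)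

theorem orderedTriangle_mono_left {a x : ℝ} (b : ℝ) (h : a ≤ x) :
    orderedTriangle x b ⊆ orderedTriangle a b :=
  fun _ hp => ⟨h.trans_lt hp.1, hp.2⟩

theorem integral_indicator_orderedTriangle_right (K : ℝ → ℝ → ℝ) (a b s : ℝ) :
    ∫ t, (orderedTriangle a b).indicator (Function.uncurry K) (s, t) =
      (Ioc a b).indicator (fun s => ∫ t in s..b, K s t) s := by
  by_cases hs : s ∈ Ioc a b
  · rw [indicator_of_mem hs, intervalIntegral.integral_of_le hs.2,
      ← integral_indicator measurableSet_Ioc]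
    congr 1 with t
    by_cases ht : t ∈ Ioc s b
    · rw [indicator_of_mem ht, indicator_of_mem (show (s, t) ∈ orderedTriangle a b from
        ⟨hs.1, ht.1, ht.2⟩)]
      rfl
    · rw [indicator_of_notMem ht, indicator_of_notMem]
      exact fun h => ht ⟨h.2.1, h.2.2⟩
  · rw [indicator_of_notMem hs]
    refine integral_eq_zero_of_ae (Filter.Eventually.of_forall fun t => ?_)
    exact indicator_of_notMem (fun h => hs ⟨h.1, h.2.1.le.trans h.2.2⟩) _

theorem integral_indicator_orderedTriangle_left (K : ℝ → ℝ → ℝ) (a b t : ℝ) :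
    ∫ s, (orderedTriangle a b).indicator (Function.uncurry K) (s, t) =
      (Ioc a b).indicator (fun t => ∫ s in a..t, K s t) t := by
  by_cases ht : t ∈ Ioc a b
  · rw [indicator_of_mem ht, intervalIntegral.integral_of_le ht.1.le,
      integral_Ioc_eq_integral_Ioo, ← integral_indicator measurableSet_Ioo]
    congr 1 with s
    by_cases hs : s ∈ Ioo a t
    · rw [indicator_of_mem hs, indicator_of_mem (show (s, t) ∈ orderedTriangle a b from
        ⟨hs.1, hs.2, ht.2⟩)]
      rfl
    · rw [indicator_of_notMem hs, indicator_of_notMem]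
      exact fun h => hs ⟨h.1, h.2.1⟩
  · rw [indicator_of_notMem ht]
    refine integral_eq_zero_of_ae (Filter.Eventually.of_forall fun s => ?_)
    exact indicator_of_notMem (fun h => ht ⟨h.1.trans h.2.1, h.2.2⟩) _

section Fubini

variable {a b : ℝ} {K : ℝ → ℝ → ℝ}

/-- The Fubini theorem on a triangle. -/
theorem integral_orderedTriangle_swap (hab : a ≤ b)
    (hK : IntegrableOn (Function.uncurry K) (orderedTriangle a b)) :
    ∫ s in a..b, ∫ t in s..b, K s t = ∫ t in a..b, ∫ s in a..t, K s t := by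
  have h := hK.integrable_indicator (measurableSet_orderedTriangle a b)
  have hswap := integral_integral_swap
    (f := fun s t => (orderedTriangle a b).indicator (Function.uncurry K) (s, t)) h
  simp_rw [integral_indicator_orderedTriangle_right, integral_indicator_orderedTriangle_left,
    integral_indicator measurableSet_Ioc] at hswap
  rwa [intervalIntegral.integral_of_le hab, intervalIntegral.integral_of_le hab]

theorem intervalIntegrable_integral_orderedTriangle_right (hab : a ≤ b)
    (hK : IntegrableOn (Function.uncurry K) (orderedTriangle a b)) :
    IntervalIntegrable (fun s => ∫ t in s..b, K s t) volume a b := by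
  have h := (hK.integrable_indicator (measurableSet_orderedTriangle a b)).integral_prod_left
  simp_rw [integral_indicator_orderedTriangle_right] at h
  rwa [intervalIntegrable_iff_integrableOn_Ioc_of_le hab, ← integrable_indicator_iff
    measurableSet_Ioc]

theorem intervalIntegrable_integral_orderedTriangle_left (hab : a ≤ b)
    (hK : IntegrableOn (Function.uncurry K) (orderedTriangle a b)) :
    IntervalIntegrable (fun t => ∫ s in a..t, K s t) volume a b := by
  have h := (hK.integrable_indicator (measurableSet_orderedTriangle a b)).integral_prod_right
  simp_rw [integral_indicator_orderedTriangle_left] at h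
  rwa [intervalIntegrable_iff_integrableOn_Ioc_of_le hab, ← integrable_indicator_iff
    measurableSet_Ioc]

end Fubini

section Kernel

variable {a b α : ℝ} {φ ψ : ℝ → ℝ}

theorem integrable_indicator_rpow_neg (hα : α < 1) (c : ℝ) :
    Integrable ((Ioc 0 c).indicator fun u : ℝ => u ^ (-α)) := by
  rw [integrable_indicator_iff measurableSet_Ioc]
  rcases le_total 0 c with hc | hc
  · exact (intervalIntegrable_iff_integrableOn_Ioc_of_le hc).1
      (intervalIntegral.intervalIntegrable_rpow' (by linarith))
  · simp [Ioc_eq_empty_of_le hc]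

theorem integrableOn_orderedTriangle_rpow_mul_left (hab : a ≤ b) (hα : α < 1)
    (hφ : IntervalIntegrable φ volume a b) :
    IntegrableOn (Function.uncurry fun s t => (t - s) ^ (-α) * φ s) (orderedTriangle a b) := by
  have hφ' := (integrable_indicator_iff measurableSet_Ioc).2
    ((intervalIntegrable_iff_integrableOn_Ioc_of_le hab).1 hφ)
  have h := (hφ'.convolution_integrand (ContinuousLinearMap.mul ℝ ℝ)
    (integrable_indicator_rpow_neg hα (b - a))).swap
  refine (h.integrableOn (s := orderedTriangle a b)).congr_fun (fun p hp => ?_)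
    (measurableSet_orderedTriangle a b)
  obtain ⟨s, t⟩ := p
  obtain ⟨h1, h2, h3⟩ : a < s ∧ s < t ∧ t ≤ b := hp
  have hs : s ∈ Ioc a b := ⟨h1, by linarith⟩
  have hu : t - s ∈ Ioc 0 (b - a) := ⟨by linarith, by linarith⟩
  simp [indicator_of_mem hs, indicator_of_mem hu, mul_comm]

theorem integrableOn_orderedTriangle_rpow_mul_right (hab : a ≤ b) (hα : α < 1)
    (hψ : IntervalIntegrable ψ volume a b) :
    IntegrableOn (Function.uncurry fun s t => (t - s) ^ (-α) * ψ t) (orderedTriangle a b) := by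
  have hψ' := (integrable_indicator_iff measurableSet_Ioc).2
    ((intervalIntegrable_iff_integrableOn_Ioc_of_le hab).1 hψ)
  have h := hψ'.convolution_integrand (ContinuousLinearMap.mul ℝ ℝ)
    (integrable_indicator_rpow_neg hα (b - a)).comp_neg
  refine (h.integrableOn (s := orderedTriangle a b)).congr_fun (fun p hp => ?_)
    (measurableSet_orderedTriangle a b)
  obtain ⟨s, t⟩ := p
  obtain ⟨h1, h2, h3⟩ : a < s ∧ s < t ∧ t ≤ b := hp
  have ht : t ∈ Ioc a b := ⟨by linarith, h3⟩
  have hu : t - s ∈ Ioc 0 (b - a) := ⟨by linarith, by linarith⟩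
  simp [indicator_of_mem ht, indicator_of_mem hu, mul_comm]

theorem integrableOn_orderedTriangle_mul_rpow_mul (hab : a ≤ b) (hα : α < 1)
    (hφ : IntervalIntegrable φ volume a b) (hψ : ContinuousOn ψ (Icc a b)) :
    IntegrableOn (Function.uncurry fun s t => ψ t * ((t - s) ^ (-α) * φ s))
      (orderedTriangle a b) := by
  obtain ⟨C, hC⟩ := isCompact_Icc.exists_bound_of_continuousOn hψ
  have hmaps : orderedTriangle a b ⊆ Prod.snd ⁻¹' Icc a b :=
    fun p hp => ⟨(hp.1.trans hp.2.1).le, hp.2.2⟩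
  have hcont : ContinuousOn (fun p : ℝ × ℝ => ψ p.2) (orderedTriangle a b) :=
    hψ.comp continuousOn_snd hmaps
  refine Integrable.bdd_mul (c := C) (integrableOn_orderedTriangle_rpow_mul_left hab hα hφ)
    (hcont.aestronglyMeasurable (measurableSet_orderedTriangle a b)) ?_
  filter_upwards [ae_restrict_mem (measurableSet_orderedTriangle a b)] with p hp
  exact hC _ (hmaps hp)

theorem integrableOn_orderedTriangle_mul (hab : a ≤ b)
    (hφ : IntervalIntegrable φ volume a b) (hψ : IntervalIntegrable ψ volume a b) :
    IntegrableOn (Function.uncurry fun s t => φ s * ψ t) (orderedTriangle a b) := by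
  have h := Integrable.mul_prod ((intervalIntegrable_iff_integrableOn_Ioc_of_le hab).1 hφ)
    ((intervalIntegrable_iff_integrableOn_Ioc_of_le hab).1 hψ)
  rw [Measure.prod_restrict] at h
  exact IntegrableOn.mono_set h fun p hp =>
    ⟨⟨hp.1, hp.2.1.le.trans hp.2.2⟩, ⟨hp.1.trans hp.2.1, hp.2.2⟩⟩

end Kernel

theorem AbsolutelyContinuousOnInterval.congr_uIcc {f g : ℝ → ℝ} {a b : ℝ}
    (hf : AbsolutelyContinuousOnInterval f a b) (h : EqOn f g (uIcc a b)) :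
    AbsolutelyContinuousOnInterval g a b := by
  rw [absolutelyContinuousOnInterval_iff] at hf ⊢
  intro ε hε
  obtain ⟨δ, hδ, H⟩ := hf ε hε
  refine ⟨δ, hδ, fun E hE hlen => ?_⟩
  rw [Finset.sum_congr rfl fun i hi => by rw [← h (hE.1 i hi).1, ← h (hE.1 i hi).2]]
  exact H E hE hlen

theorem AbsolutelyContinuousOn.comp_neg {f : ℝ → ℝ} {a b : ℝ} (hab : a ≤ b)
    (hf : AbsolutelyContinuousOn f a b) :
    AbsolutelyContinuousOn (fun x => f (-x)) (-b) (-a) := by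
  have hd : deriv (fun x => f (-x)) = fun x => -deriv f (-x) := by
    ext x; exact deriv_comp_neg f x
  refine ⟨?_, fun x hx => ?_⟩
  · rw [hd]
    exact ((IntervalIntegrable.iff_comp_neg).1 hf.1).symm.neg
  · have hx' : -x ∈ Icc a b := ⟨by linarith [hx.2], by linarith [hx.1]⟩
    have hsub : IntervalIntegrable (deriv f) volume a (-x) :=
      hf.1.mono_set (by
        rw [uIcc_of_le hx'.1, uIcc_of_le hab]; exact Icc_subset_Icc_right hx'.2)
    rw [hd, intervalIntegral.integral_neg, intervalIntegral.integral_comp_neg, neg_neg,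
      ← intervalIntegral.integral_interval_sub_left hf.1 hsub]
    simp only [neg_neg]
    rw [hf.2 _ hx', hf.2 b ⟨hab, le_rfl⟩]
    ring

/-- The right fractional integral of an absolutely continuous function is absolutely continuous. -/
theorem AbsolutelyContinuousOn.rightRLI {g : ℝ → ℝ} {a b α : ℝ} (hab : a ≤ b) (hα : α < 1)
    (hg : AbsolutelyContinuousOn g a b) :
    AbsolutelyContinuousOnInterval (rightRLI b (1 - α) g) a b := by
  set D : ℝ → ℝ := fun s => (b - s) ^ (-α) * g b - ∫ t in s..b, (t - s) ^ (-α) * deriv g t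
  have hpow : ∀ c d : ℝ, IntervalIntegrable (fun u : ℝ => u ^ (-α)) volume c d :=
    fun c d => intervalIntegral.intervalIntegrable_rpow' (by linarith)
  have hpowl : ∀ t c d : ℝ, IntervalIntegrable (fun s : ℝ => (t - s) ^ (-α)) volume c d :=
    fun t c d => by simpa using (hpow (t - c) (t - d)).comp_sub_left t
  have hpowr : ∀ x c d : ℝ, IntervalIntegrable (fun s : ℝ => (s - x) ^ (-α)) volume c d :=
    fun x c d => by simpa using (hpow (c - x) (d - x)).comp_sub_right x
  have hreflect : ∀ x t : ℝ, ∫ s in x..t, (s - x) ^ (-α) = ∫ s in x..t, (t - s) ^ (-α) := by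
    intro x t
    rw [intervalIntegral.integral_comp_sub_left (fun u : ℝ => u ^ (-α)),
      intervalIntegral.integral_comp_sub_right (fun u : ℝ => u ^ (-α))]
    simp
  have hDtri := integrableOn_orderedTriangle_rpow_mul_right hab hα hg.1
  have hD : IntervalIntegrable D volume a b :=
    ((hpowl b a b).mul_const _).sub (intervalIntegrable_integral_orderedTriangle_right hab hDtri)
  have key : ∀ x ∈ Icc a b, ∫ s in x..b, (s - x) ^ (-α) * g s = ∫ s in x..b, D s := by
    intro x hx
    have hsub : uIcc x b ⊆ uIcc a b := by
      rw [uIcc_of_le hx.2, uIcc_of_le hab]; exact Icc_subset_Icc_left hx.1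
    have hg' : IntervalIntegrable (deriv g) volume x b := hg.1.mono_set hsub
    have htri := hDtri.mono_set (orderedTriangle_mono_left b hx.1)
    have htri' := integrableOn_orderedTriangle_mul hx.2 (hpowr x x b) hg'
    have hgs : ∀ s ∈ Icc x b, g s = g b - ∫ t in s..b, deriv g t := by
      intro s hs
      have hs' : s ∈ Icc a b := ⟨hx.1.trans hs.1, hs.2⟩
      have has : IntervalIntegrable (deriv g) volume a s := hg.1.mono_set (by
        rw [uIcc_of_le hs'.1, uIcc_of_le hab]; exact Icc_subset_Icc_right hs'.2)
      rw [← intervalIntegral.integral_interval_sub_left hg.1 has, hg.2 s hs',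
        hg.2 b ⟨hab, le_rfl⟩]
      ring
    have hleft : ∫ s in x..b, (s - x) ^ (-α) * g s =
        ∫ s in x..b, ((s - x) ^ (-α) * g b - ∫ t in s..b, (s - x) ^ (-α) * deriv g t) := by
      refine intervalIntegral.integral_congr fun s hs => ?_
      rw [uIcc_of_le hx.2] at hs
      rw [hgs s hs, intervalIntegral.integral_const_mul, mul_sub]
    rw [hleft, intervalIntegral.integral_sub ((hpowr x x b).mul_const _)
      (intervalIntegrable_integral_orderedTriangle_right hx.2 htri'),
      intervalIntegral.integral_sub ((hpowl b x b).mul_const _)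
      (intervalIntegrable_integral_orderedTriangle_right hx.2 htri),
      integral_orderedTriangle_swap hx.2 htri', integral_orderedTriangle_swap hx.2 htri]
    simp_rw [intervalIntegral.integral_mul_const, hreflect]
  refine ((hD.absolutelyContinuousOnInterval_intervalIntegral
    (c := b) right_mem_uIcc).const_mul (-(1 / Real.Gamma (1 - α)))).congr_uIcc fun x hx => ?_
  rw [uIcc_of_le hab] at hx
  have hexp : 1 - α - 1 = -α := by ring
  simp only [_root_.rightRLI, hexp, key x hx]
  rw [intervalIntegral.integral_symm x b]
  ring

section OneSided

variable {a b α : ℝ} {f g : ℝ → ℝ}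

theorem intervalIntegrable_mul_caputoLeft (hab : a ≤ b) (hα : α < 1)
    (hf : AbsolutelyContinuousOn f a b) (hg : AbsolutelyContinuousOn g a b) :
    IntervalIntegrable (fun x => g x * caputoLeft a α f x) volume a b := by
  have hgc := (hg.absolutelyContinuousOnInterval hab).continuousOn
  have h := intervalIntegrable_integral_orderedTriangle_left hab
    (integrableOn_orderedTriangle_rpow_mul_left hab hα hf.1)
  exact (h.const_mul (1 / Real.Gamma (1 - α))).continuousOn_mul hgc

theorem intervalIntegrable_mul_rlRightD (hab : a ≤ b) (hα : α < 1)
    (hf : AbsolutelyContinuousOn f a b) (hg : AbsolutelyContinuousOn g a b) :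
    IntervalIntegrable (fun x => f x * rlRightD b α g x) volume a b :=
  (hg.rightRLI hab hα).intervalIntegrable_deriv.neg.continuousOn_mul
    (hf.absolutelyContinuousOnInterval hab).continuousOn

/-- Fractional integration by parts for the left Caputo derivative. -/
theorem integral_mul_caputoLeft (hab : a ≤ b) (hα : α < 1)
    (hf : AbsolutelyContinuousOn f a b) (hg : AbsolutelyContinuousOn g a b) :
    ∫ x in a..b, g x * caputoLeft a α f x =
      f b * rightRLI b (1 - α) g b - f a * rightRLI b (1 - α) g a +
        ∫ x in a..b, f x * rlRightD b α g x := by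
  have hgc := (hg.absolutelyContinuousOnInterval hab).continuousOn
  rw [uIcc_of_le hab] at hgc
  have hfubini : ∫ x in a..b, g x * caputoLeft a α f x =
      ∫ x in a..b, deriv f x * rightRLI b (1 - α) g x := by
    have h := integral_orderedTriangle_swap hab
      (integrableOn_orderedTriangle_mul_rpow_mul hab hα hf.1 hgc)
    have hexp : 1 - α - 1 = -α := by ring
    have hl : ∀ x, g x * caputoLeft a α f x = 1 / Real.Gamma (1 - α) *
        ∫ s in a..x, g x * ((x - s) ^ (-α) * deriv f s) := fun x => by
      rw [intervalIntegral.integral_const_mul, caputoLeft]; ring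
    have hr : ∀ x, deriv f x * rightRLI b (1 - α) g x = 1 / Real.Gamma (1 - α) *
        ∫ t in x..b, g t * ((t - x) ^ (-α) * deriv f x) := fun x => by
      simp_rw [← mul_assoc, intervalIntegral.integral_mul_const, rightRLI, hexp, mul_comm (g _)]
      ring
    rw [funext hl, funext hr, intervalIntegral.integral_const_mul,
      intervalIntegral.integral_const_mul, h]
  have hparts := (hf.absolutelyContinuousOnInterval hab).integral_mul_deriv_eq_deriv_mul
    (hg.rightRLI hab hα)
  simp_rw [rlRightD, mul_neg, intervalIntegral.integral_neg]
  rw [hfubini, hparts]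
  ring

end OneSided

section Reflection

variable (a b α : ℝ) (f : ℝ → ℝ) (x : ℝ)

theorem leftRLI_comp_neg : leftRLI (-b) α (fun t => f (-t)) (-x) = rightRLI b α f x := by
  have h := intervalIntegral.integral_comp_neg (a := -b) (b := -x)
    (fun t => (t - x) ^ (α - 1) * f t)
  simp only [neg_neg] at h
  rw [leftRLI, rightRLI, ← h]
  simp only [sub_eq_add_neg, add_comm]

theorem rightRLI_comp_neg : rightRLI (-a) α (fun t => f (-t)) (-x) = leftRLI a α f x := by
  simpa using (leftRLI_comp_neg (-a) α (fun t => f (-t)) (-x)).symm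

theorem caputoLeft_comp_neg :
    caputoLeft (-b) α (fun t => f (-t)) (-x) = caputoRight b α f x := by
  have h := intervalIntegral.integral_comp_neg (a := -b) (b := -x)
    (fun t => (t - x) ^ (-α) * deriv f t)
  simp only [neg_neg] at h
  rw [caputoLeft, caputoRight, ← h]
  simp only [deriv_comp_neg, mul_neg, intervalIntegral.integral_neg, neg_mul]
  simp only [sub_eq_add_neg, add_comm]

theorem rlRightD_comp_neg : rlRightD (-a) α (fun t => f (-t)) (-x) = rlLeftD a α f x := by
  have h : leftRLI a (1 - α) f = fun y => rightRLI (-a) (1 - α) (fun t => f (-t)) (-y) := by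
    ext y; rw [rightRLI_comp_neg]
  rw [rlRightD, rlLeftD, h, deriv_comp_neg]

end Reflection

section OneSided

variable {a b β : ℝ} {f g : ℝ → ℝ}

theorem intervalIntegrable_mul_caputoRight (hab : a ≤ b) (hβ : β < 1)
    (hf : AbsolutelyContinuousOn f a b) (hg : AbsolutelyContinuousOn g a b) :
    IntervalIntegrable (fun x => g x * caputoRight b β f x) volume a b := by
  have h := intervalIntegrable_mul_caputoLeft (neg_le_neg hab) hβ (hf.comp_neg hab)
    (hg.comp_neg hab)
  simpa [caputoLeft_comp_neg] using ((IntervalIntegrable.iff_comp_neg).1 h).symm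

theorem intervalIntegrable_mul_rlLeftD (hab : a ≤ b) (hβ : β < 1)
    (hf : AbsolutelyContinuousOn f a b) (hg : AbsolutelyContinuousOn g a b) :
    IntervalIntegrable (fun x => f x * rlLeftD a β g x) volume a b := by
  have h := intervalIntegrable_mul_rlRightD (neg_le_neg hab) hβ (hf.comp_neg hab)
    (hg.comp_neg hab)
  simpa [rlRightD_comp_neg] using ((IntervalIntegrable.iff_comp_neg).1 h).symm

/-- Fractional integration by parts for the right Caputo derivative. -/
theorem integral_mul_caputoRight (hab : a ≤ b) (hβ : β < 1)
    (hf : AbsolutelyContinuousOn f a b) (hg : AbsolutelyContinuousOn g a b) :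
    ∫ x in a..b, g x * caputoRight b β f x =
      -(f b * leftRLI a (1 - β) g b - f a * leftRLI a (1 - β) g a) +
        ∫ x in a..b, f x * rlLeftD a β g x := by
  have h := integral_mul_caputoLeft (neg_le_neg hab) hβ (hf.comp_neg hab) (hg.comp_neg hab)
  rw [← intervalIntegral.integral_comp_neg, ← intervalIntegral.integral_comp_neg] at h
  simp only [neg_neg, caputoLeft_comp_neg, rlRightD_comp_neg, rightRLI_comp_neg] at h
  rw [h]
  ring

end OneSided

/-- Fractional integration by parts for the combined Caputo derivative `ᶜD_γ^{α,β}`: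
`∫_a^b g (ᶜD_γ^{α,β} f) dx = γ [f · ₓI_b^{1-α} g]_a^b - (1-γ) [f · ₐIₓ^{1-β} g]_a^b
  + ∫_a^b f (D_{1-γ}^{β,α} g) dx`. -/
theorem combCaputo_integration_by_parts
    (a b α β γ : ℝ) (hab : a < b)
    (hα : α ∈ Ioo (0 : ℝ) 1) (hβ : β ∈ Ioo (0 : ℝ) 1) (hγ : γ ∈ Icc (0 : ℝ) 1)
    (f g : ℝ → ℝ)
    (hf : AbsolutelyContinuousOn f a b) (hg : AbsolutelyContinuousOn g a b) :
    ∫ x in a..b, g x * combCaputo a b α β γ f x =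
      γ * (f b * rightRLI b (1 - α) g b - f a * rightRLI b (1 - α) g a) -
        (1 - γ) * (f b * leftRLI a (1 - β) g b - f a * leftRLI a (1 - β) g a) +
        ∫ x in a..b, f x * combRL a b α β γ g x := by
  simp only [combCaputo, combRL]
  have hl : ∀ x, g x * (γ * caputoLeft a α f x + (1 - γ) * caputoRight b β f x) =
      γ * (g x * caputoLeft a α f x) + (1 - γ) * (g x * caputoRight b β f x) := fun x => by ring
  have hr : ∀ x, f x * ((1 - γ) * rlLeftD a β g x + γ * rlRightD b α g x) =
      (1 - γ) * (f x * rlLeftD a β g x) + γ * (f x * rlRightD b α g x) := fun x => by ring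
  simp_rw [hl, hr]
  rw [intervalIntegral.integral_add
      ((intervalIntegrable_mul_caputoLeft hab.le hα.2 hf hg).const_mul _)
      ((intervalIntegrable_mul_caputoRight hab.le hβ.2 hf hg).const_mul _),
    intervalIntegral.integral_add
      ((intervalIntegrable_mul_rlLeftD hab.le hβ.2 hf hg).const_mul _)
      ((intervalIntegrable_mul_rlRightD hab.le hα.2 hf hg).const_mul _)]
  simp_rw [intervalIntegral.integral_const_mul]
  rw [integral_mul_caputoLeft hab.le hα.2 hf hg, integral_mul_caputoRight hab.le hβ.2 hf hg]
  ring
end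
end
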